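/- Let $U$ be a convex subset of a real normed space with $\|u-u'\|\le R$ for all $u,u'\in U$, let $L\ge 0$, let $F:U\to\mathbb{R}$ be convex and $L$-Lipschitz on $U$ (that is, $|F(u)-F(v)|\le L\|u-v\|$ for all $u,v\in U$), and let $G:U\to\mathbb{R}$ be convex. Suppose Slater's condition holds: there exist $u_0\in U$ and $\delta>0$ with $G(u_0)\le-\delta$. Fix $\varepsilon$ with $0<\varepsilon<\delta$. If $u^*$ minimizes $F$ over $\{u\in U: G(u)\le 0\}$ and $u^{*,\varepsilon}$ minimizes $F$ over $\{u\in U: G(u)\le\varepsilon\}$, then $F(u^*)-F(u^{*,\varepsilon})\le LR\varepsilon/\delta$. -/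

import Mathlib

/-!
Moving an `ε`-feasible point `u` towards the Slater point `u₀` by the fraction `ε / (δ + ε)` of the
segment makes it feasible, by convexity of `G`, and raises `F` by at most
`L * ‖u₀ - u‖ * ε / (δ + ε)`, while the value reached cannot be below the optimal one.
-/

theorem lineMap_mem_sublevel {𝕜 E : Type*} [Field 𝕜] [LinearOrder 𝕜] [IsStrictOrderedRing 𝕜]
    [AddCommGroup E] [Module 𝕜 E] {s : Set E} {g : E → 𝕜} (hg : ConvexOn 𝕜 s g)
    {x₀ x : E} (hx₀ : x₀ ∈ s) (hx : x ∈ s) {a b c : 𝕜} (hab : a < b) (hbc : b ≤ c)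
    (hgx₀ : g x₀ ≤ a) (hgx : g x ≤ c) :
    AffineMap.lineMap x x₀ ((c - b) / (c - a)) ∈ {y ∈ s | g y ≤ b} := by
  have hac : 0 < c - a := sub_pos.2 (hab.trans_le hbc)
  set t := (c - b) / (c - a) with ht
  have ht₀ : 0 ≤ t := div_nonneg (sub_nonneg.2 hbc) hac.le
  have ht₁ : 0 ≤ 1 - t := sub_nonneg.2 ((div_le_one hac).2 (sub_le_sub_left hab.le c))
  refine ⟨hg.1.lineMap_mem hx hx₀ ⟨ht₀, sub_nonneg.1 ht₁⟩, ?_⟩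
  rw [AffineMap.lineMap_apply_module]
  calc g ((1 - t) • x + t • x₀)
      ≤ (1 - t) * g x + t * g x₀ := hg.2 hx hx₀ ht₁ ht₀ (sub_add_cancel 1 t)
    _ ≤ (1 - t) * c + t * a := by gcongr
    _ = c - t * (c - a) := by ring
    _ = b := by rw [ht, div_mul_cancel₀ _ hac.ne', sub_sub_cancel]

theorem exists_mem_sublevel_norm_sub_eq {E : Type*} [SeminormedAddCommGroup E] [NormedSpace ℝ E]
    {s : Set E} {g : E → ℝ} (hg : ConvexOn ℝ s g) {x₀ x : E} (hx₀ : x₀ ∈ s) (hx : x ∈ s)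
    {a b c : ℝ} (hab : a < b) (hbc : b ≤ c) (hgx₀ : g x₀ ≤ a) (hgx : g x ≤ c) :
    ∃ y ∈ {y ∈ s | g y ≤ b}, ‖y - x‖ = (c - b) / (c - a) * ‖x₀ - x‖ := by
  refine ⟨_, lineMap_mem_sublevel hg hx₀ hx hab hbc hgx₀ hgx, ?_⟩
  have ht : 0 ≤ (c - b) / (c - a) :=
    div_nonneg (sub_nonneg.2 hbc) (sub_nonneg.2 (hab.le.trans hbc))
  rw [← dist_eq_norm, dist_lineMap_left, Real.norm_of_nonneg ht, dist_comm, dist_eq_norm]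

theorem stmt1_general {E : Type*} [SeminormedAddCommGroup E] [NormedSpace ℝ E]
    {U : Set E} {F G : E → ℝ} {L : ℝ} (hL : ∀ u ∈ U, ∀ v ∈ U, |F u - F v| ≤ L * ‖u - v‖)
    (hG : ConvexOn ℝ U G) {u₀ : E} (hu₀ : u₀ ∈ U) {δ : ℝ} (hδ : 0 < δ) (hslater : G u₀ ≤ -δ)
    {ε : ℝ} (hε : 0 ≤ ε) {m : ℝ} (hm : ∀ u ∈ U, G u ≤ 0 → m ≤ F u)
    {u : E} (hu : u ∈ U) (hGu : G u ≤ ε) :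
    m - F u ≤ L * ‖u₀ - u‖ * ε / (δ + ε) := by
  obtain ⟨v, ⟨hvU, hGv⟩, hvu⟩ :=
    exists_mem_sublevel_norm_sub_eq hG hu₀ hu (neg_lt_zero.2 hδ) hε hslater hGu
  calc m - F u ≤ F v - F u := sub_le_sub_right (hm v hvU hGv) _
    _ ≤ L * ‖v - u‖ := (le_abs_self _).trans (hL v hvU u hu)
    _ = L * ‖u₀ - u‖ * ε / (δ + ε) := by rw [hvu]; ring

/-- Comparison of the original constrained problem with the
`ε`-relaxed problem: if `u*` minimizes the convex `L`-Lipschitz `F` (`L ≥ 0`) over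
`{u ∈ U : G u ≤ 0}` and `u^{*,ε}` minimizes `F` over `{u ∈ U : G u ≤ ε}`,
with Slater point `G u₀ ≤ -δ` and `0 < ε < δ`, and `U` has diameter at most `R`, then
`F u* - F u^{*,ε} ≤ L R ε / δ`. -/
theorem stmt1 {E : Type*} [NormedAddCommGroup E] [NormedSpace ℝ E]
    (U : Set E) (hU : Convex ℝ U) (R : ℝ)
    (hR : ∀ u ∈ U, ∀ u' ∈ U, ‖u - u'‖ ≤ R)
    (F G : E → ℝ) (hF : ConvexOn ℝ U F) (L : ℝ) (hL0 : 0 ≤ L)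
    (hL : ∀ u ∈ U, ∀ v ∈ U, |F u - F v| ≤ L * ‖u - v‖)
    (hG : ConvexOn ℝ U G)
    (u₀ : E) (hu₀ : u₀ ∈ U) (δ : ℝ) (hδ : 0 < δ) (hslater : G u₀ ≤ -δ)
    (ε : ℝ) (hε : 0 < ε) (hεδ : ε < δ)
    (ustar : E) (hustar : ustar ∈ U) (hGstar : G ustar ≤ 0)
    (hmin : ∀ u ∈ U, G u ≤ 0 → F ustar ≤ F u)
    (ueps : E) (hueps : ueps ∈ U) (hGeps : G ueps ≤ ε)
    (hmineps : ∀ u ∈ U, G u ≤ ε → F ueps ≤ F u) :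
    F ustar - F ueps ≤ L * R * ε / δ := by
  have hR₀ : 0 ≤ R := (norm_nonneg _).trans (hR u₀ hu₀ u₀ hu₀)
  exact (stmt1_general hL hG hu₀ hδ hslater hε.le hmin hueps hGeps).trans <| by
    gcongr
    exacts [hR u₀ hu₀ ueps hueps, le_add_of_nonneg_right hε.le]
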